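/- For every real c with W₋(1) < c < W₊(1), the limit as ε → 0⁺ of ∫₀¹ ( W₊'(y)/(W₊(y) − c − iε) − W₋'(y)/(W₋(y) − c − iε) ) dy exists and equals ln( (W₊(1) − c)/(c − W₋(1)) ) + iπ. -/

import Mathlib

open Set Filter Topology

/-!
For non-real `z`, the function `W' / (W - z)` has the antiderivative `log (W - z)` with the
principal branch of the logarithm, because `W - z` never meets the real axis. Since `W₊` and `W₋`
start at the same value, the contributions of the left endpoint cancel, and what remains is
`log (W₊ 1 - z) - log (W₋ 1 - z)`. As `z → c` from the upper half-plane, `W₊ 1 - z` tends to a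
positive number, where the logarithm is continuous, while `W₋ 1 - z` tends to a negative number from
below the branch cut, where the logarithm has imaginary part `-π`; this produces the term `iπ`.
-/

section LogarithmicPrimitive

open MeasureTheory

variable {a b : ℝ}

theorem intervalIntegrable_div_of_continuousOn {𝕜 : Type*} [NormedField 𝕜] {μ : Measure ℝ}
    {f g : ℝ → 𝕜} (hf : IntervalIntegrable f μ a b) (hg : ContinuousOn g (uIcc a b))
    (hg₀ : ∀ x ∈ uIcc a b, g x ≠ 0) : IntervalIntegrable (fun x ↦ f x / g x) μ a b := by
  simpa only [div_eq_mul_inv] using hf.mul_continuousOn (g := fun x ↦ (g x)⁻¹) (hg.inv₀ hg₀)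

theorem integral_deriv_div_eq_log_sub_log {f f' : ℝ → ℂ} (hf : ContinuousOn f (uIcc a b))
    (hf_deriv : ∀ x ∈ uIoo a b, HasDerivAt f (f' x) x) (hf' : IntervalIntegrable f' volume a b)
    (hf_slit : ∀ x ∈ uIcc a b, f x ∈ Complex.slitPlane) :
    ∫ x in a..b, f' x / f x = Complex.log (f b) - Complex.log (f a) :=
  intervalIntegral.integral_eq_sub_of_hasDeriv_right (hf.clog hf_slit)
    (fun x hx ↦ ((hf_deriv x hx).clog_real
      (hf_slit x (uIoo_subset_uIcc_self hx))).hasDerivWithinAt)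
    (intervalIntegrable_div_of_continuousOn hf' hf
      fun x hx ↦ Complex.slitPlane_ne_zero (hf_slit x hx))

theorem ofReal_sub_mem_slitPlane (x : ℝ) {z : ℂ} (hz : z.im ≠ 0) :
    (x : ℂ) - z ∈ Complex.slitPlane :=
  .inr (by simpa using hz)

variable {W W' : ℝ → ℝ} {z : ℂ}

theorem intervalIntegrable_ofReal_div_ofReal_sub {μ : Measure ℝ} (hW : ContinuousOn W (uIcc a b))
    (hW' : IntervalIntegrable W' μ a b) (hz : z.im ≠ 0) :
    IntervalIntegrable (fun y ↦ (W' y : ℂ) / ((W y : ℂ) - z)) μ a b :=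
  intervalIntegrable_div_of_continuousOn ⟨hW'.1.ofReal, hW'.2.ofReal⟩
    ((Complex.continuous_ofReal.comp_continuousOn hW).sub continuousOn_const)
    fun y _ ↦ Complex.slitPlane_ne_zero (ofReal_sub_mem_slitPlane (W y) hz)

theorem integral_deriv_div_ofReal_sub (hW : ContinuousOn W (uIcc a b))
    (hW_deriv : ∀ y ∈ uIoo a b, HasDerivAt W (W' y) y) (hW' : IntervalIntegrable W' volume a b)
    (hz : z.im ≠ 0) :
    ∫ y in a..b, (W' y : ℂ) / ((W y : ℂ) - z) =
      Complex.log ((W b : ℂ) - z) - Complex.log ((W a : ℂ) - z) :=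
  integral_deriv_div_eq_log_sub_log
    ((Complex.continuous_ofReal.comp_continuousOn hW).sub continuousOn_const)
    (fun y hy ↦ (hW_deriv y hy).ofReal_comp.sub_const z) ⟨hW'.1.ofReal, hW'.2.ofReal⟩
    fun y _ ↦ ofReal_sub_mem_slitPlane (W y) hz

end LogarithmicPrimitive

section BoundaryValues

variable {x c : ℝ}

theorem tendsto_log_ofReal_sub_of_gt (h : c < x) :
    Tendsto (fun z : ℂ ↦ Complex.log (x - z)) (𝓝 (c : ℂ)) (𝓝 (Real.log (x - c) : ℂ)) := by
  rw [Complex.ofReal_log (sub_pos.2 h).le, Complex.ofReal_sub]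
  refine (tendsto_id.const_sub (x : ℂ)).clog ?_
  exact_mod_cast Complex.ofReal_mem_slitPlane.2 (sub_pos.2 h)

theorem tendsto_log_ofReal_sub_of_lt (h : x < c) :
    Tendsto (fun z : ℂ ↦ Complex.log (x - z)) (𝓝[{z : ℂ | 0 < z.im}] (c : ℂ))
      (𝓝 ((Real.log (c - x) : ℂ) - Real.pi * Complex.I)) := by
  have approach_from_below : Tendsto (fun z : ℂ ↦ (x : ℂ) - z) (𝓝[{z : ℂ | 0 < z.im}] (c : ℂ))
      (𝓝[{z : ℂ | z.im < 0}] ((x : ℂ) - c)) :=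
    (tendsto_id.const_sub (x : ℂ)).inf
      (tendsto_principal_principal.2 fun z hz ↦ by simpa using hz)
  have norm_eq : ‖(x : ℂ) - c‖ = c - x := by
    rw [← Complex.ofReal_sub, Complex.norm_real, Real.norm_of_nonpos (sub_neg.2 h).le, neg_sub]
  have log_limit := Complex.tendsto_log_nhdsWithin_im_neg_of_re_neg_of_im_zero
    (z := (x : ℂ) - c) (by simpa using h) (by simp)
  rw [norm_eq] at log_limit
  exact log_limit.comp approach_from_below

theorem tendsto_ofReal_add_mul_I (c : ℝ) :
    Tendsto (fun ε : ℝ ↦ (c : ℂ) + ε * Complex.I) (𝓝[>] 0) (𝓝[{z : ℂ | 0 < z.im}] (c : ℂ)) := by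
  have continuous_path : Continuous fun ε : ℝ ↦ (c : ℂ) + ε * Complex.I := by fun_prop
  refine Tendsto.inf (continuous_path.tendsto' 0 c (by simp)) ?_
  exact tendsto_principal_principal.2 fun ε hε ↦ by simpa using hε

end BoundaryValues

theorem log_integral_jump_general {a b c : ℝ} {Wp Wm Wp' Wm' : ℝ → ℝ}
    (hWp : ContinuousOn Wp (uIcc a b)) (hWm : ContinuousOn Wm (uIcc a b))
    (hWp_deriv : ∀ y ∈ uIoo a b, HasDerivAt Wp (Wp' y) y)
    (hWm_deriv : ∀ y ∈ uIoo a b, HasDerivAt Wm (Wm' y) y)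
    (hWp' : IntervalIntegrable Wp' MeasureTheory.volume a b)
    (hWm' : IntervalIntegrable Wm' MeasureTheory.volume a b)
    (h_start : Wp a = Wm a) (hWm_lt : Wm b < c) (h_lt_Wp : c < Wp b) :
    Tendsto
      (fun z : ℂ ↦ ∫ y in a..b, ((Wp' y : ℂ) / ((Wp y : ℂ) - z) - (Wm' y : ℂ) / ((Wm y : ℂ) - z)))
      (𝓝[{z : ℂ | 0 < z.im}] (c : ℂ))
      (𝓝 ((Real.log ((Wp b - c) / (c - Wm b)) : ℂ) + Real.pi * Complex.I)) := by
  have integral_eq : ∀ z ∈ {z : ℂ | 0 < z.im},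
      Complex.log (Wp b - z) - Complex.log (Wm b - z) =
        ∫ y in a..b, ((Wp' y : ℂ) / ((Wp y : ℂ) - z) - (Wm' y : ℂ) / ((Wm y : ℂ) - z)) := by
    intro z (hz : 0 < z.im)
    rw [intervalIntegral.integral_sub
        (intervalIntegrable_ofReal_div_ofReal_sub hWp hWp' hz.ne')
        (intervalIntegrable_ofReal_div_ofReal_sub hWm hWm' hz.ne'),
      integral_deriv_div_ofReal_sub hWp hWp_deriv hWp' hz.ne',
      integral_deriv_div_ofReal_sub hWm hWm_deriv hWm' hz.ne', h_start, sub_sub_sub_cancel_right]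
  have limit_eq : (Real.log ((Wp b - c) / (c - Wm b)) : ℂ) + Real.pi * Complex.I =
      Real.log (Wp b - c) - (Real.log (c - Wm b) - Real.pi * Complex.I) := by
    rw [Real.log_div (sub_pos.2 h_lt_Wp).ne' (sub_pos.2 hWm_lt).ne', Complex.ofReal_sub]
    ring
  rw [limit_eq]
  exact (((tendsto_log_ofReal_sub_of_gt h_lt_Wp).mono_left nhdsWithin_le_nhds).sub
    (tendsto_log_ofReal_sub_of_lt hWm_lt)).congr' (eventually_mem_nhdsWithin.mono integral_eq)

/-- The Sokhotski–Plemelj type jump computation: for `W₋(1) < c < W₊(1)`,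
`∫₀¹ (W₊'/(W₊−c−iε) − W₋'/(W₋−c−iε)) dy → ln((W₊(1)−c)/(c−W₋(1))) + iπ` as `ε → 0⁺`. -/
theorem log_integral_jump (Wp Wm Wp' Wm' : ℝ → ℝ)
    (hWp0 : Wp 0 = 0) (hWm0 : Wm 0 = 0)
    (hWp : ∀ y ∈ Icc (0:ℝ) 1, HasDerivAt Wp (Wp' y) y)
    (hWm : ∀ y ∈ Icc (0:ℝ) 1, HasDerivAt Wm (Wm' y) y)
    (hWp'c : ContinuousOn Wp' (Icc (0:ℝ) 1)) (hWm'c : ContinuousOn Wm' (Icc (0:ℝ) 1))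
    (hWp'pos : ∀ y ∈ Icc (0:ℝ) 1, 0 < Wp' y)
    (hWm'neg : ∀ y ∈ Icc (0:ℝ) 1, Wm' y < 0)
    (c : ℝ) (hc₁ : Wm 1 < c) (hc₂ : c < Wp 1) :
    Tendsto
      (fun ε : ℝ => ∫ y in (0:ℝ)..1,
        ((Wp' y : ℂ) / ((Wp y : ℂ) - (c:ℂ) - (ε:ℂ) * Complex.I)
          - (Wm' y : ℂ) / ((Wm y : ℂ) - (c:ℂ) - (ε:ℂ) * Complex.I)))
      (𝓝[>] (0:ℝ))
      (𝓝 ((Real.log ((Wp 1 - c) / (c - Wm 1)) : ℂ) + (Real.pi : ℂ) * Complex.I)) := by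
  rw [← uIcc_of_le zero_le_one] at hWp hWm hWp'c hWm'c
  simp only [sub_sub]
  exact (log_integral_jump_general (HasDerivAt.continuousOn hWp) (HasDerivAt.continuousOn hWm)
    (fun y hy ↦ hWp y (uIoo_subset_uIcc_self hy)) (fun y hy ↦ hWm y (uIoo_subset_uIcc_self hy))
    hWp'c.intervalIntegrable hWm'c.intervalIntegrable (hWp0.trans hWm0.symm) hc₁ hc₂).comp
    (tendsto_ofReal_add_mul_I c)
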